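/- For every γ ∈ (0,1) there exist a constant c'(γ) > 0 and an integer m₀(γ) such that for all m ≥ m₀: if there exist embeddings x_1,…,x_m ∈ ℝ^d with ‖x_v‖₂ ≤ 1 and, for every directed loop-free graph on {1,…,m} with exactly m edges, parameters U = [U_1|…|U_h], V = [V_1|…|V_h] with ‖U‖_F ≤ 1, ‖V‖_F ≤ 1, τ ∈ [−1,1], and total key dimension D_K = Σ_k d_k recovering that graph with margin γ (edges score at least τ + γ and ordered non-edges at most τ − γ under S(u,v) = max_k x_uᵀ U_k V_kᵀ x_v), then D_K ≥ c'(γ)·(m·log m)/d. -/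

import Mathlib

open Matrix

/-- Squared Frobenius norm of a real matrix. -/
def frobSq {n m : ℕ} (A : Matrix (Fin n) (Fin m) ℝ) : ℝ := ∑ i, ∑ j, A i j ^ 2

/-- The edge set `E` is recovered with margin `γ` by the QK parameters `(U, V, τ)` over
the embeddings `x`: every edge has max-over-heads score `max_k x_uᵀ U_k V_kᵀ x_v ≥ τ + γ`
and every ordered loop-free non-edge has all head scores `≤ τ − γ`. -/
def Recovers {m d h : ℕ} {dk : Fin h → ℕ} (x : Fin m → Fin d → ℝ)
    (U V : ∀ k : Fin h, Matrix (Fin d) (Fin (dk k)) ℝ) (τ γ : ℝ)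
    (E : Finset (Fin m × Fin m)) : Prop :=
  (∀ e ∈ E, ∃ k, τ + γ ≤ Matrix.vecMul (x e.1) (U k) ⬝ᵥ Matrix.vecMul (x e.2) (V k)) ∧
  (∀ u v : Fin m, u ≠ v → (u, v) ∉ E →
    ∀ k, Matrix.vecMul (x u) (U k) ⬝ᵥ Matrix.vecMul (x v) (V k) ≤ τ - γ)

/-!
Flattening all heads, the parameters `(U, V, τ)` form a real vector space of dimension
`2 d D_K + 1`, and the admissible ones lie in the unit ball of the maximum of the two Frobenius
norms and `|τ|`. On this ball each head score is bilinear and 1-Lipschitz in `U` and in `V`, so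
parameters recovering two different graphs with margin `γ` are at distance at least `2γ/3`: on
an edge belonging to only one of the graphs the two values of `score - τ` differ by at least
`2γ`, while both terms of the score and `τ` move by at most the distance. Comparing volumes
of balls, at most `(1 + 3/γ)^(2 d D_K + 1)` graphs are recoverable, whereas
`(m (m-1)).choose m ≥ (m-1)^m` graphs have to be. Taking logarithms, the summand `1` in
the exponent is absorbed once `m log m ≥ 4 log (1 + 3/γ)`.
-/

section Packing

open MeasureTheory Metric Module

theorem card_le_of_pairwise_le_dist {E ι : Type*} [NormedAddCommGroup E] [NormedSpace ℝ E]
    [FiniteDimensional ℝ E] [Fintype ι] {p : ι → E} {c : E} {R r : ℝ} (hr : 0 < r)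
    (hR : 0 ≤ R) (hp : ∀ i, dist (p i) c ≤ R) (hsep : Pairwise fun i j => r ≤ dist (p i) (p j)) :
    (Fintype.card ι : ℝ) ≤ (1 + 2 * R / r) ^ finrank ℝ E := by
  borelize E
  let μ : Measure E := Measure.addHaar
  have real_ball (x : E) {s : ℝ} (hs : 0 < s) :
      μ.real (ball x s) = s ^ finrank ℝ E * μ.real (ball 0 1) := by
    rw [measureReal_def, Measure.addHaar_ball_of_pos μ x hs, ENNReal.toReal_mul,
      ENNReal.toReal_ofReal (by positivity), measureReal_def]
  have disjoint_balls : Pairwise (Function.onFun Disjoint fun i => ball (p i) (r / 2)) :=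
    fun i j hij => ball_disjoint_ball (by linarith [hsep hij])
  have balls_subset : ⋃ i, ball (p i) (r / 2) ⊆ ball c (R + r / 2) :=
    Set.iUnion_subset fun i => ball_subset_ball' (by linarith [hp i])
  have volume_le : Fintype.card ι * ((r / 2) ^ finrank ℝ E * μ.real (ball 0 1)) ≤
      (R + r / 2) ^ finrank ℝ E * μ.real (ball 0 1) := by
    calc Fintype.card ι * ((r / 2) ^ finrank ℝ E * μ.real (ball 0 1))
        = ∑ i, μ.real (ball (p i) (r / 2)) := by simp [real_ball _ (half_pos hr)]
      _ = μ.real (⋃ i, ball (p i) (r / 2)) :=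
          (measureReal_iUnion_fintype disjoint_balls fun _ => measurableSet_ball).symm
      _ ≤ μ.real (ball c (R + r / 2)) := measureReal_mono balls_subset
      _ = (R + r / 2) ^ finrank ℝ E * μ.real (ball 0 1) := real_ball c (by positivity)
  have unit_ball_pos : 0 < μ.real (ball (0 : E) 1) :=
    ENNReal.toReal_pos (measure_ball_pos μ 0 one_pos).ne' measure_ball_lt_top.ne
  rw [← mul_assoc, mul_le_mul_iff_left₀ unit_ball_pos, ← le_div_iff₀ (by positivity), ← div_pow]
    at volume_le
  have base_eq : (R + r / 2) / (r / 2) = 1 + 2 * R / r := by field_simp; ring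
  rwa [← base_eq]

end Packing

section Counting

theorem pow_le_choose_mul (k q : ℕ) : q ^ k ≤ (k * q).choose k := by
  refine Nat.le_of_mul_le_mul_left ?_ k.factorial_pos
  calc k.factorial * q ^ k = ∏ i ∈ Finset.range k, (k - i) * q := by
        rw [Finset.prod_mul_distrib, Finset.prod_const, Finset.card_range,
          ← Nat.descFactorial_eq_prod_range, Nat.descFactorial_self]
    _ ≤ ∏ i ∈ Finset.range k, (k * q - i) := by
        refine Finset.prod_le_prod' fun i _ => ?_
        rcases q.eq_zero_or_pos with rfl | hq
        · simp
        · rw [Nat.sub_mul]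
          exact Nat.sub_le_sub_left (Nat.le_mul_of_pos_right i hq) _
    _ = k.factorial * (k * q).choose k := by
        rw [← Nat.descFactorial_eq_prod_range, Nat.descFactorial_eq_factorial_mul_choose]

theorem mul_log_le_of_sub_one_pow_le {m N : ℕ} {B : ℝ} (hm : 3 ≤ m)
    (h : ((m - 1 : ℕ) : ℝ) ^ m ≤ B ^ N) : m * Real.log m ≤ 2 * N * Real.log B := by
  have cast_hm : (3 : ℝ) ≤ m := mod_cast hm
  rw [Nat.cast_pred (by lia)] at h
  have log_le : Real.log m ≤ 2 * Real.log (m - 1) := by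
    calc Real.log m ≤ Real.log ((m - 1) ^ 2) := Real.log_le_log (by linarith) (by nlinarith)
      _ = 2 * Real.log (m - 1) := by simp
  calc m * Real.log m ≤ 2 * (m * Real.log (m - 1)) := by
        linear_combination (m : ℝ) * log_le
    _ = 2 * Real.log ((m - 1) ^ m) := by rw [Real.log_pow]
    _ ≤ 2 * Real.log (B ^ N) := by gcongr; exact pow_pos (by linarith) m
    _ = 2 * N * Real.log B := by rw [Real.log_pow, mul_assoc]

end Counting

section Score

open WithLp
open scoped Matrix.Norms.Frobenius

theorem norm_toLp_vecMul_le {ι κ : Type*} [Fintype ι] [Fintype κ] (x : ι → ℝ)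
    (A : Matrix ι κ ℝ) : ‖toLp 2 (x ᵥ* A)‖ ≤ ‖toLp 2 x‖ * ‖A‖ := by
  simpa only [← replicateRow_vecMul, frobenius_norm_replicateRow] using
    frobenius_norm_mul (replicateRow Unit x) A

theorem vecMul_dotProduct_vecMul_le {ι κ ι' : Type*} [Fintype ι] [Fintype κ] [Fintype ι']
    (x : ι → ℝ) (y : ι' → ℝ) (A : Matrix ι κ ℝ) (B : Matrix ι' κ ℝ) :
    x ᵥ* A ⬝ᵥ y ᵥ* B ≤ (‖toLp 2 x‖ * ‖A‖) * (‖toLp 2 y‖ * ‖B‖) := by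
  calc x ᵥ* A ⬝ᵥ y ᵥ* B = inner ℝ (toLp 2 (y ᵥ* B)) (toLp 2 (x ᵥ* A)) := by
        simp [EuclideanSpace.inner_toLp_toLp]
    _ ≤ ‖toLp 2 (y ᵥ* B)‖ * ‖toLp 2 (x ᵥ* A)‖ := real_inner_le_norm _ _
    _ ≤ (‖toLp 2 y‖ * ‖B‖) * (‖toLp 2 x‖ * ‖A‖) := by gcongr <;> apply norm_toLp_vecMul_le
    _ = (‖toLp 2 x‖ * ‖A‖) * (‖toLp 2 y‖ * ‖B‖) := mul_comm _ _

theorem frobSq_eq_norm_sq {n m : ℕ} (A : Matrix (Fin n) (Fin m) ℝ) : frobSq A = ‖A‖ ^ 2 := by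
  rw [frobenius_norm_def, ← Real.sqrt_eq_rpow, Real.sq_sqrt (by positivity)]
  simp [frobSq]

/-- The concatenations `[U_1|…|U_h]` of head matrices. The `ℓ²` product of the Frobenius norms is
the Frobenius norm of the concatenation. -/
abbrev HeadSpace {h : ℕ} (d : ℕ) (dk : Fin h → ℕ) : Type :=
  PiLp 2 fun k => Matrix (Fin d) (Fin (dk k)) ℝ

/-- The space of QK parameters `(U, V, τ)`, in which packing is measured. The product carries the
maximum norm, so its unit ball is given by the three separate constraints on `U`, `V` and `τ`. -/
abbrev ParamSpace {h : ℕ} (d : ℕ) (dk : Fin h → ℕ) : Type :=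
  HeadSpace d dk × HeadSpace d dk × ℝ

theorem norm_toLp_eq_sqrt_sum_frobSq {d h : ℕ} {dk : Fin h → ℕ}
    (U : ∀ k : Fin h, Matrix (Fin d) (Fin (dk k)) ℝ) :
    ‖(toLp 2 U : HeadSpace d dk)‖ = √(∑ k, frobSq (U k)) := by
  simp only [PiLp.norm_eq_of_L2, frobSq_eq_norm_sq]

theorem finrank_paramSpace {h : ℕ} (d : ℕ) (dk : Fin h → ℕ) :
    Module.finrank ℝ (ParamSpace d dk) = 2 * d * ∑ k, dk k + 1 := by
  have finrank_headSpace : Module.finrank ℝ (HeadSpace d dk) = d * ∑ k, dk k := by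
    rw [(WithLp.linearEquiv 2 ℝ _).finrank_eq, Module.finrank_pi_fintype]
    simp [Module.finrank_matrix, Finset.mul_sum]
  rw [Module.finrank_prod, Module.finrank_prod, finrank_headSpace, Module.finrank_self]
  ring

theorem vecMul_dotProduct_vecMul_sub_le {ι κ ι' : Type*} [Fintype ι] [Fintype κ] [Fintype ι']
    {x : ι → ℝ} {y : ι' → ℝ} {A A' : Matrix ι κ ℝ} {B B' : Matrix ι' κ ℝ}
    (hx : ‖toLp 2 x‖ ≤ 1) (hy : ‖toLp 2 y‖ ≤ 1) (hA' : ‖A'‖ ≤ 1) (hB : ‖B‖ ≤ 1) :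
    x ᵥ* A ⬝ᵥ y ᵥ* B - x ᵥ* A' ⬝ᵥ y ᵥ* B' ≤ ‖A - A'‖ + ‖B - B'‖ := by
  calc x ᵥ* A ⬝ᵥ y ᵥ* B - x ᵥ* A' ⬝ᵥ y ᵥ* B'
      = x ᵥ* (A - A') ⬝ᵥ y ᵥ* B + x ᵥ* A' ⬝ᵥ y ᵥ* (B - B') := by
        simp only [vecMul_sub, sub_dotProduct, dotProduct_sub]
        ring
    _ ≤ (‖toLp 2 x‖ * ‖A - A'‖) * (‖toLp 2 y‖ * ‖B‖) +
        (‖toLp 2 x‖ * ‖A'‖) * (‖toLp 2 y‖ * ‖B - B'‖) := by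
        gcongr <;> apply vecMul_dotProduct_vecMul_le
    _ ≤ (1 * ‖A - A'‖) * (1 * 1) + (1 * 1) * (1 * ‖B - B'‖) := by gcongr
    _ = ‖A - A'‖ + ‖B - B'‖ := by ring

variable {m d h : ℕ} {dk : Fin h → ℕ} {x : Fin m → Fin d → ℝ} {γ : ℝ}

theorem two_mul_div_three_le_dist_of_recovers {E E' : Finset (Fin m × Fin m)}
    {p q : ParamSpace d dk} (hx : ∀ v, ‖toLp 2 (x v)‖ ≤ 1) (hp : ‖p‖ ≤ 1) (hq : ‖q‖ ≤ 1)
    (hpE : Recovers x p.1.ofLp p.2.1.ofLp p.2.2 γ E)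
    (hqE' : Recovers x q.1.ofLp q.2.1.ofLp q.2.2 γ E')
    {e : Fin m × Fin m} (he : e ∈ E) (he' : e ∉ E') (hloop : e.1 ≠ e.2) :
    2 * γ / 3 ≤ dist p q := by
  obtain ⟨k, edge_score⟩ := hpE.1 e he
  have nonedge_score := hqE'.2 e.1 e.2 hloop he' k
  have score_sub_le := vecMul_dotProduct_vecMul_sub_le (hx e.1) (hx e.2)
    ((PiLp.norm_apply_le q.1 k).trans ((norm_fst_le q).trans hq))
    ((PiLp.norm_apply_le p.2.1 k).trans ((norm_fst_le p.2).trans ((norm_snd_le p).trans hp)))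
    (A := p.1 k) (B' := q.2.1 k)
  have queries_le : ‖p.1 k - q.1 k‖ ≤ dist p q :=
    (PiLp.norm_apply_le (p.1 - q.1) k).trans <|
      (norm_fst_le (p - q)).trans_eq (dist_eq_norm p q).symm
  have snd_le : ‖p.2 - q.2‖ ≤ dist p q := (norm_snd_le (p - q)).trans_eq (dist_eq_norm p q).symm
  have keys_le : ‖p.2.1 k - q.2.1 k‖ ≤ dist p q :=
    (PiLp.norm_apply_le (p.2.1 - q.2.1) k).trans <| (norm_fst_le (p.2 - q.2)).trans snd_le
  have threshold_le : q.2.2 - p.2.2 ≤ dist p q := by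
    rw [← neg_sub]
    exact (neg_le_abs _).trans ((norm_snd_le (p.2 - q.2)).trans snd_le)
  linarith

/-- The edge set `E` is recovered with margin `γ` by some normalized QK parameters with key
dimensions `dk`. -/
def Recoverable (dk : Fin h → ℕ) (x : Fin m → Fin d → ℝ) (γ : ℝ)
    (E : Finset (Fin m × Fin m)) : Prop :=
  ∃ (U V : ∀ k : Fin h, Matrix (Fin d) (Fin (dk k)) ℝ) (τ : ℝ),
    √(∑ k, frobSq (U k)) ≤ 1 ∧ √(∑ k, frobSq (V k)) ≤ 1 ∧ |τ| ≤ 1 ∧ Recovers x U V τ γ E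

theorem Recoverable.exists_norm_le_one {E : Finset (Fin m × Fin m)}
    (hE : Recoverable dk x γ E) :
    ∃ p : ParamSpace d dk, ‖p‖ ≤ 1 ∧ Recovers x p.1.ofLp p.2.1.ofLp p.2.2 γ E := by
  obtain ⟨U, V, τ, hU, hV, hτ, hrec⟩ := hE
  refine ⟨(toLp 2 U, toLp 2 V, τ), ?_, hrec⟩
  simpa only [norm_prod_le_iff, norm_toLp_eq_sqrt_sum_frobSq] using ⟨hU, hV, hτ⟩

theorem card_le_of_forall_recoverable (hγ : 0 < γ) (hx : ∀ v, ‖toLp 2 (x v)‖ ≤ 1)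
    (𝓕 : Finset (Finset (Fin m × Fin m))) (hloop : ∀ E ∈ 𝓕, ∀ e ∈ E, e.1 ≠ e.2)
    (hrec : ∀ E ∈ 𝓕, Recoverable dk x γ E) :
    (𝓕.card : ℝ) ≤ (1 + 3 / γ) ^ (2 * d * ∑ k, dk k + 1) := by
  choose p hp hpE using fun E : 𝓕 => (hrec E E.2).exists_norm_le_one
  have separated : Pairwise fun E E' : 𝓕 => 2 * γ / 3 ≤ dist (p E) (p E') := by
    intro E E' hne
    obtain ⟨e, ⟨he, he'⟩ | ⟨he', he⟩⟩ :
        ∃ e, (e ∈ E.1 ∧ e ∉ E'.1) ∨ (e ∈ E'.1 ∧ e ∉ E.1) := by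
      simpa [Finset.Nonempty, Finset.mem_symmDiff] using
        Finset.symmDiff_nonempty.2 (Subtype.coe_ne_coe.2 hne)
    · exact two_mul_div_three_le_dist_of_recovers hx (hp E) (hp E') (hpE E) (hpE E') he he'
        (hloop E E.2 e he)
    · rw [dist_comm]
      exact two_mul_div_three_le_dist_of_recovers hx (hp E') (hp E) (hpE E') (hpE E) he' he
        (hloop E' E'.2 e he')
  have base_eq : 1 + 2 * 1 / (2 * γ / 3) = 1 + 3 / γ := by field_simp
  have packing := card_le_of_pairwise_le_dist (c := 0) (by positivity) zero_le_one
    (fun E => (dist_zero_right (p E)).trans_le (hp E)) separated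
  rwa [Fintype.card_coe, finrank_paramSpace, base_eq] at packing

theorem choose_le_of_forall_recoverable (hγ : 0 < γ) (hx : ∀ v, ‖toLp 2 (x v)‖ ≤ 1) (m' : ℕ)
    (hrec : ∀ E : Finset (Fin m × Fin m), (∀ e ∈ E, e.1 ≠ e.2) → E.card = m' →
      Recoverable dk x γ E) :
    ((m * (m - 1)).choose m' : ℝ) ≤ (1 + 3 / γ) ^ (2 * d * ∑ k, dk k + 1) := by
  have hloop : ∀ E ∈ Finset.univ.offDiag.powersetCard m', ∀ e ∈ E, (e : Fin m × Fin m).1 ≠ e.2 :=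
    fun E hE e he => (Finset.mem_offDiag.1 ((Finset.mem_powersetCard.1 hE).1 he)).2.2
  simpa [Finset.offDiag_card, Nat.mul_sub_one] using
    card_le_of_forall_recoverable hγ hx (Finset.univ.offDiag.powersetCard m') hloop
      fun E hE => hrec E (hloop E hE) (Finset.mem_powersetCard.1 hE).2

end Score

/-- **Permutation-regime lower bound (`m' = m`).**
For every `γ ∈ (0,1)` there are `c'(γ) > 0` and `m₀(γ)` such that for all `m ≥ m₀`:
if some unit-norm embeddings in `ℝ^d` allow every loop-free directed graph on `m`
vertices with exactly `m` edges to be recovered with margin `γ` by normalized QK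
parameters of total key dimension `D_K = Σ_k dk k`, then `D_K ≥ c'(γ)·(m·log m)/d`. -/
theorem stmt_14 (γ : ℝ) (hγ0 : 0 < γ) (hγ1 : γ < 1) :
    ∃ c' > (0 : ℝ), ∃ m₀ : ℕ, ∀ m : ℕ, m₀ ≤ m →
      ∀ d h : ℕ, 1 ≤ d → ∀ dk : Fin h → ℕ,
      ∀ x : Fin m → Fin d → ℝ, (∀ v, Real.sqrt (∑ r, x v r ^ 2) ≤ 1) →
      (∀ E : Finset (Fin m × Fin m), (∀ e ∈ E, e.1 ≠ e.2) → E.card = m →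
        ∃ (U V : ∀ k : Fin h, Matrix (Fin d) (Fin (dk k)) ℝ) (τ : ℝ),
          Real.sqrt (∑ k, frobSq (U k)) ≤ 1 ∧
          Real.sqrt (∑ k, frobSq (V k)) ≤ 1 ∧
          |τ| ≤ 1 ∧ Recovers x U V τ γ E) →
      c' * (m * Real.log m) / d ≤ ((∑ k, dk k : ℕ) : ℝ) := by
  set L := Real.log (1 + 3 / γ)
  have hL : 0 < L := Real.log_pos (lt_add_of_pos_right 1 (by positivity))
  refine ⟨1 / (8 * L), by positivity, max 3 ⌈4 * L⌉₊, fun m hm d h hd dk x hx H => ?_⟩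
  obtain ⟨hm3, hmL⟩ := max_le_iff.1 hm
  have hx' (v) : ‖WithLp.toLp 2 (x v)‖ ≤ 1 := by simpa [EuclideanSpace.norm_eq] using hx v
  have counting : ((m - 1 : ℕ) : ℝ) ^ m ≤ (1 + 3 / γ) ^ (2 * d * ∑ k, dk k + 1) := by
    calc ((m - 1 : ℕ) : ℝ) ^ m ≤ (m * (m - 1)).choose m := mod_cast pow_le_choose_mul m (m - 1)
      _ ≤ (1 + 3 / γ) ^ (2 * d * ∑ k, dk k + 1) := choose_le_of_forall_recoverable hγ0 hx' m H
  have entropy_le := mul_log_le_of_sub_one_pow_le hm3 counting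
  have one_le_log : 1 ≤ Real.log m := by
    rw [Real.le_log_iff_exp_le (by positivity)]
    exact Real.exp_one_lt_three.le.trans (mod_cast hm3)
  have absorb : 4 * L ≤ m * Real.log m :=
    (Nat.ceil_le.1 hmL).trans (le_mul_of_one_le_right m.cast_nonneg one_le_log)
  push_cast at entropy_le ⊢
  rw [div_le_iff₀ (mod_cast hd), one_div_mul_eq_div, div_le_iff₀ (by positivity)]
  linarith
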